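/- arXiv:1806.02204 — 2 statements merged into one kernel-verified Lean document; each statement's English description precedes it below -/
import Mathlib

section
/- Let d ≥ 2, let 1 ≤ i ≤ d and 2 ≤ s ≤ d, and let Σ_s^i ⊆ ℝ^d be the set of points y such that there exists a set J of s indices with i ∈ J and all coordinates y_j for j ∈ J equal. Then for every x = (x_1, …, x_d) ∈ ℝ^d there exist s−1 pairwise distinct indices l_1, …, l_{s−1}, all different from i, such that |x_{l_j} − x_i| ≤ 2 · dist(x, Σ_s^i) for every j = 1, …, s−1, where dist(x, Σ_s^i) is the infimum of the Euclidean distances ‖x − y‖ over y ∈ Σ_s^i. -/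
/-!
The stratum is closed and nonempty, so the distance from `x` to it is attained at some `y`, whose
coordinates agree on an index set `J` of size `s` containing `i`. For `l` in `J` other than `i`,
`y l = y i` gives `|x l - x i| ≤ |x l - y l| + |x i - y i| ≤ 2 ‖x - y‖`, since each coordinate is
bounded by the Euclidean norm.
-/

open Finset

/-- The stratum is a finite union, over index sets `J`, of the closed sets `Σ(J)`. -/
lemma isClosed_stratum (d s : ℕ) (i : Fin d) :
    IsClosed {y : EuclideanSpace ℝ (Fin d) |
      ∃ J : Finset (Fin d), J.card = s ∧ i ∈ J ∧ ∀ j ∈ J, ∀ j' ∈ J, y j = y j'} := by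
  rw [Set.ofPred_exists]
  refine isClosed_iUnion_of_finite fun J => ?_
  refine isClosed_const.and (isClosed_const.and ?_)
  simp only [Set.ofPred_forall]
  refine isClosed_iInter fun j => isClosed_iInter fun _ =>
    isClosed_iInter fun j' => isClosed_iInter fun _ => ?_
  exact isClosed_eq (by fun_prop) (by fun_prop)

lemma stratum_nonempty (d s : ℕ) (hs₁ : 2 ≤ s) (hs₂ : s ≤ d) (i : Fin d) :
    {y : EuclideanSpace ℝ (Fin d) |
      ∃ J : Finset (Fin d), J.card = s ∧ i ∈ J ∧ ∀ j ∈ J, ∀ j' ∈ J, y j = y j'}.Nonempty := by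
  obtain ⟨J, hJ, hc⟩ := Finset.exists_superset_card_eq (s := {i}) (n := s)
    (by simp only [Finset.card_singleton]; omega) (by simpa using hs₂)
  exact ⟨0, J, hc, by simpa using hJ, fun _ _ _ _ => rfl⟩

/-- lem:cluster.size.  `ℝ^d` carries the Euclidean norm
(`EuclideanSpace ℝ (Fin d)`).  `Σ_s^i` is the set of points `y` having some
set `J` of `s` coordinates, including the `i`-th, all equal.  For every `x`
there are `s-1` pairwise distinct indices, all different from `i`, whose
coordinates are within `2 · dist(x, Σ_s^i)` of `x_i`. -/
theorem cluster_size_estimate (d s : ℕ) (hd : 2 ≤ d) (hs₁ : 2 ≤ s) (hs₂ : s ≤ d)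
    (i : Fin d) (x : EuclideanSpace ℝ (Fin d)) :
    ∃ T : Finset (Fin d), T.card = s - 1 ∧ i ∉ T ∧
      ∀ l ∈ T, |x l - x i| ≤
        2 * Metric.infDist x
          {y : EuclideanSpace ℝ (Fin d) |
            ∃ J : Finset (Fin d), J.card = s ∧ i ∈ J ∧
              ∀ j ∈ J, ∀ j' ∈ J, y j = y j'} := by
  obtain ⟨y, ⟨J, hc, hi, hJ⟩, hy⟩ :=
    (isClosed_stratum d s i).exists_infDist_eq_dist (stratum_nonempty d s hs₁ hs₂ i) x
  refine ⟨J.erase i, by rw [Finset.card_erase_of_mem hi, hc], Finset.notMem_erase i J, ?_⟩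
  intro l hl
  rw [hy, dist_eq_norm]
  have hcoord : ∀ k, |x k - y k| ≤ ‖x - y‖ := fun k => by
    simpa using PiLp.norm_apply_le (x - y) k
  have hyli : y l = y i := hJ l (Finset.mem_of_mem_erase hl) i hi
  calc |x l - x i| = |(x l - y l) - (x i - y i)| := by rw [hyli]; congr 1; ring
    _ ≤ |x l - y l| + |x i - y i| := abs_sub _ _
    _ ≤ 2 * ‖x - y‖ := by linarith [hcoord l, hcoord i]
end

section
/- Let d ≥ 1 and let μ_0, …, μ_{2d−2} be real numbers such that δ(μ) = det M_d(μ) ≠ 0 and the top-left (d−1)×(d−1) minor of M_d(μ) (the determinant of the submatrix obtained by deleting the last row and last column) is also nonzero. For t ∈ ℝ let (σ_1(t), …, σ_d(t)) be the unique solution of M_d(μ) · (σ_d(t), …, σ_1(t))^T = −(μ_d, …, μ_{2d−2}, t)^T, and set Q_t(z) = z^d + σ_1(t) z^{d−1} + … + σ_d(t). Then there exist positive constants t_0 and λ_0 such that for every t with |t| ≥ t_0 the polynomial Q_t has at most one real root z with |z| ≥ λ_0. -/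
/-!
By Cramer's rule the solution of the linear system is affine in `t`, namely `σ_{k+1} = a k + t * b k`
with `b 0 = -(minor / det M) ≠ 0`. Put `w = z⁻¹`. Dividing `Q_t(z) = 0` by `z ^ (n + 1)`
gives `p(w) + t * w * q(w) = 0`, where `p(w) = 1 + ∑ a k * w ^ (k + 1)` and
`q(w) = ∑ b k * w ^ k`. Hence `G(w) = w * q(w) / p(w)` takes the same value `-1 / t` at the
reciprocals of all large roots. Since `G'(0) = b 0 ≠ 0`, the inverse function theorem makes `G`
injective near `0` (`exists_injective_near_zero`), so two roots of large modulus coincide.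
-/

open Finset

/-- Two solutions `w` near `0` of the reciprocal equation `w ^ (n + 1) * Q_t(w⁻¹) = 0`, for
the same `t ≠ 0`, coincide;
the neighbourhood does not depend on `t`. -/
lemma exists_injective_near_zero (n : ℕ) (a b : Fin (n + 1) → ℝ) (hb : b 0 ≠ 0) :
    ∃ ε > (0 : ℝ), ∀ t w₁ w₂ : ℝ, t ≠ 0 → |w₁| < ε → |w₂| < ε →
      1 + ∑ k : Fin (n + 1), (a k + t * b k) * w₁ ^ ((k : ℕ) + 1) = 0 →
      1 + ∑ k : Fin (n + 1), (a k + t * b k) * w₂ ^ ((k : ℕ) + 1) = 0 → w₁ = w₂ := by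
  set p : ℝ → ℝ := fun w => 1 + ∑ k : Fin (n + 1), a k * w ^ ((k : ℕ) + 1) with hp
  set q : ℝ → ℝ := fun w => ∑ k : Fin (n + 1), b k * w ^ (k : ℕ) with hq
  have hp0 : p 0 = 1 := by simp [hp]
  have hq0 : q 0 = b 0 := by
    simp only [hq]
    rw [Fin.sum_univ_succ]
    simp
  have hpc : ContDiff ℝ 1 p := by fun_prop
  have hqc : ContDiff ℝ 1 q := by fun_prop
  have hsplit : ∀ t w : ℝ,
      1 + ∑ k : Fin (n + 1), (a k + t * b k) * w ^ ((k : ℕ) + 1) = p w + t * (w * q w) := by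
    intro t w
    simp only [hp, hq, Finset.mul_sum, add_assoc, ← Finset.sum_add_distrib]
    congr 1
    refine Finset.sum_congr rfl fun k _ => ?_
    ring
  have hps := hpc.contDiffAt.hasStrictDerivAt (x := 0) one_ne_zero
  have hqs := hqc.contDiffAt.hasStrictDerivAt (x := 0) one_ne_zero
  have hG := ((hasStrictDerivAt_id (0 : ℝ)).mul hqs).fun_div hps (by simp [hp0])
  -- the quotient-rule derivative at `0` is `q 0 / p 0 = b 0`
  have hne : ((1 * q 0 + id 0 * deriv q 0) * p 0 - (id * q : ℝ → ℝ) 0 * deriv p 0) / p 0 ^ 2 ≠ 0 := by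
    simpa [hp0, hq0] using hb
  have hinj := hG.eventually_left_inverse hne
  have hpne : ∀ᶠ w in nhds (0 : ℝ), p w ≠ 0 :=
    hpc.continuous.continuousAt.eventually_ne (by simp [hp0])
  obtain ⟨ε, hε, h⟩ := Metric.eventually_nhds_iff.mp (hinj.and hpne)
  refine ⟨ε, hε, fun t w₁ w₂ ht h₁ h₂ e₁ e₂ => ?_⟩
  obtain ⟨l₁, n₁⟩ := h (y := w₁) (by simpa using h₁)
  obtain ⟨l₂, n₂⟩ := h (y := w₂) (by simpa using h₂)
  rw [hsplit] at e₁ e₂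
  have hval : ∀ w, p w ≠ 0 → p w + t * (w * q w) = 0 → (id * q : ℝ → ℝ) w / p w = -1 / t := by
    intro w hw e
    simp only [Pi.mul_apply, id]
    rw [div_eq_div_iff hw ht]
    linarith
  rw [← l₁, ← l₂, hval w₁ n₁ e₁, hval w₂ n₂ e₂]

/-- thm:nodes.Prony.curves.  Here `d = n + 1 ≥ 1`.  The moment
Hankel matrix `M r c = μ (r + c)` is nondegenerate and so is its top-left
`(d-1) × (d-1)` minor (delete the last row and column).  The unknown vector
`s : Fin d → ℝ` encodes `s k = σ_{k+1}`, so the column `(σ_d, …, σ_1)` has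
`c`-th entry `s c.rev`, and `Q_t(z) = z^d + σ_1(t) z^{d-1} + … + σ_d(t)`.
There are positive constants `t₀, λ₀` such that for every `|t| ≥ t₀`, the
polynomial `Q_t` has at most one real root `z` with `|z| ≥ λ₀`. -/
theorem at_most_one_node_escapes (n : ℕ) (μ : ℕ → ℝ)
    (M : Matrix (Fin (n + 1)) (Fin (n + 1)) ℝ)
    (hM : ∀ r c : Fin (n + 1), M r c = μ ((r : ℕ) + (c : ℕ)))
    (hδ : M.det ≠ 0)
    (hminor : (M.submatrix (Fin.castSucc : Fin n → Fin (n + 1))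
        (Fin.castSucc : Fin n → Fin (n + 1))).det ≠ 0) :
    ∃ t₀ > (0 : ℝ), ∃ lam₀ > (0 : ℝ), ∀ t : ℝ, t₀ ≤ |t| →
      ∀ s : Fin (n + 1) → ℝ,
        (∀ r : Fin (n + 1), ∑ c : Fin (n + 1), M r c * s c.rev =
          -(if (r : ℕ) < n then μ ((n + 1) + (r : ℕ)) else t)) →
        ∀ z₁ z₂ : ℝ, lam₀ ≤ |z₁| → lam₀ ≤ |z₂| →
          z₁ ^ (n + 1) + ∑ k : Fin (n + 1), s k * z₁ ^ (n - (k : ℕ)) = 0 →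
          z₂ ^ (n + 1) + ∑ k : Fin (n + 1), s k * z₂ ^ (n - (k : ℕ)) = 0 →
          z₁ = z₂ := by
  classical
  -- the right-hand side is `-(u + t • e_last)`; `a` and `b` are the two parts of its image under
  -- `M⁻¹`, read in reversed order
  let u : Fin (n + 1) → ℝ := fun r => if (r : ℕ) < n then μ ((n + 1) + (r : ℕ)) else 0
  let a : Fin (n + 1) → ℝ := fun k => -(M⁻¹.mulVec u) k.rev
  let b : Fin (n + 1) → ℝ := fun k => -M⁻¹ k.rev (Fin.last n)
  have hb : b 0 ≠ 0 := by
    simp only [b, Fin.rev_zero, Matrix.inv_def, Matrix.smul_apply,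
      Matrix.adjugate_fin_succ_eq_det_submatrix, Fin.succAbove_last, Ring.inverse_eq_inv']
    simp [hδ, hminor]
  obtain ⟨ε, hε, h⟩ := exists_injective_near_zero n a b hb
  refine ⟨1, one_pos, 2 / ε, by positivity, fun t ht s hs z₁ z₂ h₁ h₂ e₁ e₂ => ?_⟩
  have ht0 : t ≠ 0 := by
    rintro rfl
    norm_num at ht
  have hs' : ∀ k, s k = a k + t * b k := by
    have hmul : M.mulVec (fun c => s c.rev) = -(u + t • Pi.single (Fin.last n) 1) := by
      funext r
      refine (hs r).trans ?_
      by_cases hr : (r : ℕ) < n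
      · have : r ≠ Fin.last n := fun hh => by simp [hh] at hr
        simp [u, hr, this]
      · have : r = Fin.last n := Fin.ext (by have := r.2; simp only [Fin.val_last]; omega)
        simp [u, this]
    have hsol := congrArg M⁻¹.mulVec hmul
    rw [Matrix.mulVec_mulVec, Matrix.nonsing_inv_mul _ (isUnit_iff_ne_zero.mpr hδ),
      Matrix.one_mulVec, Matrix.mulVec_neg, Matrix.mulVec_add, Matrix.mulVec_smul,
      Matrix.mulVec_single_one] at hsol
    intro k
    have hk := congrFun hsol k.rev
    simp only [Fin.rev_rev, Pi.neg_apply, Pi.add_apply, Pi.smul_apply, smul_eq_mul,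
      Matrix.col_apply] at hk
    rw [hk]
    simp only [a, b]
    ring
  have key : ∀ z : ℝ, 2 / ε ≤ |z| →
      z ^ (n + 1) + ∑ k : Fin (n + 1), s k * z ^ (n - (k : ℕ)) = 0 →
      |z⁻¹| < ε ∧ 1 + ∑ k : Fin (n + 1), (a k + t * b k) * z⁻¹ ^ ((k : ℕ) + 1) = 0 := by
    intro z hz e
    have hzpos : 0 < |z| := lt_of_lt_of_le (by positivity) hz
    have hz0 : z ≠ 0 := abs_pos.mp hzpos
    constructor
    · rw [abs_inv, inv_lt_comm₀ hzpos hε]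
      refine lt_of_lt_of_le ?_ hz
      rw [inv_eq_one_div]
      gcongr
      norm_num
    · have hpow : z ^ (n + 1) ≠ 0 := pow_ne_zero _ hz0
      apply (mul_eq_zero_iff_right hpow).mp
      rw [← e, add_mul, one_mul, Finset.sum_mul]
      congr 1
      refine Finset.sum_congr rfl fun k _ => ?_
      rw [← hs' k, mul_assoc]
      congr 1
      have hk : z ^ (n + 1) = z ^ (n - (k : ℕ)) * z ^ ((k : ℕ) + 1) := by
        rw [← pow_add]
        congr 1
        have := k.2
        omega
      rw [hk, inv_pow]
      field_simp
  obtain ⟨b₁, r₁⟩ := key z₁ h₁ e₁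
  obtain ⟨b₂, r₂⟩ := key z₂ h₂ e₂
  exact inv_injective (h t _ _ ht0 b₁ b₂ r₁ r₂)
end
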